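/- The family of 6-element subsets of Z/55 ∪ (Z/55)' ∪ {∞} obtained as follows is a Steiner system S(2,6,111): take the orbits under the action of Z/55 (acting by addition simultaneously on both copies of Z/55 and fixing ∞) of the base blocks [0,11,22,33,44,∞], [0',11',22',33',44',∞], [0,1,4,49,0',13'], [0,2,15,27,31',37'], [0,5,19,39,30',47'], [0,8,31,32',34',48'], [0,9,38,27',45',52'], [0,18,2',23',33',38'], [0,21',41',49',50',53'], where unprimed elements lie in the first copy of Z/55, primed elements in the second copy, and Z/55 acts by n·x = x+n on each copy. -/

import Mathlib

/-- The point set: two copies of Z/55 together with one extra point ∞ (= `none`). -/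
abbrev PtsS26111 := Option (ZMod 55 ⊕ ZMod 55)

/-- Translation by n on both copies of Z/55, fixing ∞. -/
def trS26111 (n : ZMod 55) : PtsS26111 → PtsS26111
  | .some (.inl a) => .some (.inl (a + n))
  | .some (.inr a) => .some (.inr (a + n))
  | .none => .none

/-- First copy of Z/55 (unprimed points). -/
def u55 (a : ℕ) : PtsS26111 := .some (.inl (a : ZMod 55))

/-- Second copy of Z/55 (primed points). -/
def p55 (a : ℕ) : PtsS26111 := .some (.inr (a : ZMod 55))

/-- The point ∞. -/
def inf55 : PtsS26111 := .none

/-- The nine base blocks. -/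
def baseS26111 : Finset (Finset PtsS26111) :=
  { {u55 0, u55 11, u55 22, u55 33, u55 44, inf55},
    {p55 0, p55 11, p55 22, p55 33, p55 44, inf55},
    {u55 0, u55 1, u55 4, u55 49, p55 0, p55 13},
    {u55 0, u55 2, u55 15, u55 27, p55 31, p55 37},
    {u55 0, u55 5, u55 19, u55 39, p55 30, p55 47},
    {u55 0, u55 8, u55 31, p55 32, p55 34, p55 48},
    {u55 0, u55 9, u55 38, p55 27, p55 45, p55 52},
    {u55 0, u55 18, p55 2, p55 23, p55 33, p55 38},
    {u55 0, p55 21, p55 41, p55 49, p55 50, p55 53} }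

/-- All translates of the base blocks. -/
def blocksS26111 : Finset (Finset PtsS26111) :=
  Finset.univ.biUnion (fun n : ZMod 55 => baseS26111.image (fun b => b.image (trS26111 n)))

/-- Decode a natural number as a point: `0..54` unprimed, `55..109` primed, then infinity. -/
def dec (k : ℕ) : PtsS26111 := if k < 55 then u55 k else if k < 110 then p55 (k - 55) else inf55

/-- Translation on codes. -/
def sh (n k : ℕ) : ℕ :=
  if k < 55 then (k + n) % 55 else if k < 110 then (k - 55 + n) % 55 + 55 else 110

/-- The block given by a list of codes. -/
def blk (l : List ℕ) : Finset PtsS26111 := (l.map dec).toFinset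

/-- The coded base blocks. -/
def baseN : List (List ℕ) := [
  [0, 11, 22, 33, 44, 110],
  [55, 66, 77, 88, 99, 110],
  [0, 1, 4, 49, 55, 68],
  [0, 2, 15, 27, 86, 92],
  [0, 5, 19, 39, 85, 102],
  [0, 8, 31, 87, 89, 103],
  [0, 9, 38, 82, 100, 107],
  [0, 18, 57, 78, 88, 93],
  [0, 76, 96, 104, 105, 108]]

/-- The coded blocks, as translates. -/
def allN : List (List ℕ) := (List.range 55).flatMap (fun n => baseN.map (fun l => l.map (sh n)))

theorem tr_dec (n k : ℕ) : trS26111 (n : ZMod 55) (dec k) = dec (sh n k) := by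
  have e : ∀ m : ℕ, ((m % 55 : ℕ) : ZMod 55) = m := fun m => ZMod.natCast_mod m 55
  unfold dec sh
  by_cases h1 : k < 55
  · have h2 : (k + n) % 55 < 55 := Nat.mod_lt _ (by norm_num)
    simp only [h1, h2, if_true, u55, trS26111, e, Nat.cast_add]
  · by_cases h3 : k < 110
    · have h2 : (k - 55 + n) % 55 < 55 := Nat.mod_lt _ (by norm_num)
      have h4 : ¬ ((k - 55 + n) % 55 + 55 < 55) := by omega
      have h5 : (k - 55 + n) % 55 + 55 < 110 := by omega
      simp only [h1, h3, h4, h5, if_true, if_false, p55, trS26111, e, Nat.cast_add,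
        Nat.add_sub_cancel]
    · simp only [h1, h3, if_false, inf55, trS26111]
      rfl

theorem cast55_inj {a b : ℕ} (ha : a < 55) (hb : b < 55) (h : (a : ZMod 55) = b) : a = b := by
  have := (ZMod.natCast_eq_natCast_iff' a b 55).1 h
  rwa [Nat.mod_eq_of_lt ha, Nat.mod_eq_of_lt hb] at this

theorem dec_inj {a b : ℕ} (ha : a < 111) (hb : b < 111) (h : dec a = dec b) : a = b := by
  unfold dec at h
  split_ifs at h with h1 h2 h3 h4 h5 h6 h7
  all_goals
    first
    | omega
    | (simp only [u55, p55, inf55, Option.some.injEq, Sum.inl.injEq, Sum.inr.injEq,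
        reduceCtorEq] at h
       try (have := cast55_inj (by omega) (by omega) h; omega))

theorem dec_surj (p : PtsS26111) : ∃ k < 111, dec k = p := by
  rcases p with _ | a | a
  · exact ⟨110, by norm_num, rfl⟩
  · refine ⟨a.val, by have := ZMod.val_lt a; omega, ?_⟩
    have := ZMod.val_lt a
    simp [dec, this, u55]
  · refine ⟨a.val + 55, by have := ZMod.val_lt a; omega, ?_⟩
    have := ZMod.val_lt a
    have h1 : ¬ (a.val + 55 < 55) := by omega
    have h2 : a.val + 55 < 110 := by omega
    simp only [dec, h1, h2, if_true, if_false, p55, Nat.add_sub_cancel, ZMod.natCast_zmod_val]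

theorem mem_blk {l : List ℕ} (hl : ∀ x ∈ l, x < 111) {k : ℕ} (hk : k < 111) :
    dec k ∈ blk l ↔ k ∈ l := by
  simp only [blk, List.mem_toFinset, List.mem_map]
  constructor
  · rintro ⟨x, hx, hxk⟩
    rwa [← dec_inj (hl x hx) hk hxk]
  · intro h
    exact ⟨k, h, rfl⟩

theorem image_blk (n : ℕ) (l : List ℕ) :
    (blk l).image (trS26111 (n : ZMod 55)) = blk (l.map (sh n)) := by
  ext p
  simp only [blk, List.mem_toFinset, List.mem_map, Finset.mem_image]
  constructor
  · rintro ⟨_, ⟨x, hx, rfl⟩, rfl⟩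
    exact ⟨sh n x, ⟨x, hx, rfl⟩, (tr_dec n x).symm⟩
  · rintro ⟨_, ⟨x, hx, rfl⟩, rfl⟩
    exact ⟨dec x, ⟨x, hx, rfl⟩, tr_dec n x⟩

theorem blk_congr {l m : List ℕ} (h1 : ∀ x ∈ l, x ∈ m) (h2 : ∀ x ∈ m, x ∈ l) : blk l = blk m := by
  ext p
  simp only [blk, List.mem_toFinset, List.mem_map]
  exact ⟨fun ⟨x, hx, e⟩ => ⟨x, h1 x hx, e⟩, fun ⟨x, hx, e⟩ => ⟨x, h2 x hx, e⟩⟩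

theorem base_eq : baseS26111 = (baseN.map blk).toFinset := by
  unfold baseS26111 baseN
  simp only [blk, List.map_cons, List.map_nil, List.toFinset_cons, List.toFinset_nil, dec,
    Nat.reduceLT, Nat.reduceSub, if_true, if_false, insert_empty_eq]

/-- Wrapper for membership in the family of blocks. -/
structure IsBlk (b : Finset PtsS26111) : Prop where
  ex : ∃ l ∈ allN, blk l = b

theorem isBlk_iff (b : Finset PtsS26111) : b ∈ blocksS26111 ↔ IsBlk b := by
  unfold blocksS26111
  rw [base_eq]
  simp only [Finset.mem_biUnion, Finset.mem_univ, true_and, Finset.mem_image, List.mem_toFinset,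
    List.mem_map]
  constructor
  · rintro ⟨n, _, ⟨l, hl, rfl⟩, rfl⟩
    refine ⟨l.map (sh n.val), ?_, ?_⟩
    · exact List.mem_flatMap.2 ⟨n.val, List.mem_range.2 (ZMod.val_lt n), List.mem_map.2 ⟨l, hl, rfl⟩⟩
    · rw [← image_blk, ZMod.natCast_zmod_val]
  · rintro ⟨_, hl, rfl⟩
    obtain ⟨n, hn, hl⟩ := List.mem_flatMap.1 hl
    obtain ⟨l, hl2, rfl⟩ := List.mem_map.1 hl
    exact ⟨(n : ZMod 55), blk l, ⟨l, hl2, rfl⟩, image_blk n l⟩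

theorem allN_good : allN.all (fun l => l.all (fun x => Nat.blt x 111)
    && Nat.beq l.length 6 && decide l.Nodup) = true := by
  decide +kernel

theorem allN_lt {l : List ℕ} (hl : l ∈ allN) : ∀ x ∈ l, x < 111 := by
  have h := List.all_eq_true.1 allN_good l hl
  simp only [Bool.and_eq_true, List.all_eq_true, Nat.blt_eq] at h
  exact h.1.1

theorem allN_card {l : List ℕ} (hl : l ∈ allN) : (blk l).card = 6 := by
  have h := List.all_eq_true.1 allN_good l hl
  simp only [Bool.and_eq_true, Nat.beq_eq, decide_eq_true_eq] at h
  rw [blk, List.toFinset_card_of_nodup, List.length_map, h.1.2]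
  exact List.Nodup.map_on (fun x hx y hy e => dec_inj (allN_lt hl x hx) (allN_lt hl y hy) e) h.2

theorem tr_tr (m n : ZMod 55) (p : PtsS26111) : trS26111 m (trS26111 n p) = trS26111 (n + m) p := by
  rcases p with _ | a | a <;> simp [trS26111, add_assoc]

theorem tr_zero (p : PtsS26111) : trS26111 0 p = p := by
  rcases p with _ | a | a <;> simp [trS26111]

theorem IsBlk.tr (m : ZMod 55) {b : Finset PtsS26111} (hb : IsBlk b) :
    IsBlk (b.image (trS26111 m)) := by
  rw [← isBlk_iff] at hb ⊢
  simp only [blocksS26111, Finset.mem_biUnion, Finset.mem_univ, true_and,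
    Finset.mem_image (s := baseS26111)] at hb ⊢
  obtain ⟨n, B, hB, rfl⟩ := hb
  refine ⟨n + m, B, hB, ?_⟩
  rw [Finset.image_image]
  congr 1
  funext p
  simp [tr_tr]

theorem image_tr_neg (m : ZMod 55) (b : Finset PtsS26111) :
    (b.image (trS26111 m)).image (trS26111 (-m)) = b := by
  rw [Finset.image_image]
  have : trS26111 (-m) ∘ trS26111 m = id := by
    funext p; simp [tr_tr, tr_zero]
  rw [this, Finset.image_id]

/-- The property that a unique block passes through two points. -/
def Uniq (p q : PtsS26111) : Prop := ∃! b, IsBlk b ∧ p ∈ b ∧ q ∈ b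

theorem Uniq.symm {p q : PtsS26111} (h : Uniq p q) : Uniq q p := by
  obtain ⟨b, ⟨hb, hp, hq⟩, hu⟩ := h
  exact ⟨b, ⟨hb, hq, hp⟩, fun c hc => hu c ⟨hc.1, hc.2.2, hc.2.1⟩⟩

theorem Uniq.tr {p q : PtsS26111} (m : ZMod 55) (h : Uniq p q) :
    Uniq (trS26111 m p) (trS26111 m q) := by
  obtain ⟨b, ⟨hb, hp, hq⟩, hu⟩ := h
  refine ⟨b.image (trS26111 m), ⟨hb.tr m, Finset.mem_image_of_mem _ hp,
    Finset.mem_image_of_mem _ hq⟩, ?_⟩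
  rintro c ⟨hc, hpc, hqc⟩
  have h1 := hu (c.image (trS26111 (-m))) ⟨hc.tr _, ?_, ?_⟩
  · rw [← h1]
    simpa using (image_tr_neg (-m) c).symm
  · simpa [tr_tr, tr_zero] using Finset.mem_image_of_mem (trS26111 (-m)) hpc
  · simpa [tr_tr, tr_zero] using Finset.mem_image_of_mem (trS26111 (-m)) hqc

/-- Boolean test that two lists have the same members. -/
def same (l m : List ℕ) : Bool := l.all (fun x => m.elem x) && m.all (fun x => l.elem x)

theorem blk_same {l m : List ℕ} (h : same l m = true) : blk l = blk m := by
  simp only [same, Bool.and_eq_true, List.all_eq_true, List.elem_iff] at h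
  exact blk_congr h.1 h.2

/-- The blocks in `L` are blocks through `z`, every block through `z` is one of them, and
every other point is on exactly one of them. -/
def test (z : ℕ) (L : List (List ℕ)) : Bool :=
  L.all (fun l => l.elem z && allN.any (fun m => same m l))
  && allN.all (fun m => !(m.elem z) || L.any (fun l => same m l))
  && L.all (fun l => l.all (fun x => Nat.blt x 111))
  && (List.range 111).all (fun k => Nat.beq k z || Nat.beq (L.filter (fun l => l.elem k)).length 1)

theorem uniq_of_test {z : ℕ} {L : List (List ℕ)} (h : test z L = true) (hz : z < 111)
    (q : PtsS26111) (hq : q ≠ dec z) : Uniq (dec z) q := by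
  obtain ⟨k, hk, rfl⟩ := dec_surj q
  have hkz : k ≠ z := fun e => hq (by rw [e])
  simp only [test, Bool.and_eq_true, List.all_eq_true, List.elem_iff, List.any_eq_true,
    Bool.or_eq_true, Bool.not_eq_true', Nat.blt_eq, Nat.beq_eq, List.mem_range] at h
  obtain ⟨⟨⟨h1, h2⟩, h3⟩, h4⟩ := h
  obtain ⟨l, hl⟩ := List.length_eq_one_iff.1 ((h4 k hk).resolve_left hkz)
  have key : ∀ m, m ∈ L ∧ k ∈ m ↔ m = l := by
    intro m
    have : m ∈ L.filter (fun l => l.elem k) ↔ m = l := by rw [hl]; simp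
    rwa [List.mem_filter, List.elem_iff] at this
  obtain ⟨hlL, hkl⟩ := (key l).2 rfl
  obtain ⟨hzl, m, hm, hs⟩ := h1 l hlL
  refine ⟨blk l, ⟨⟨m, hm, blk_same hs⟩, (mem_blk (h3 l hlL) hz).2 hzl,
    (mem_blk (h3 l hlL) hk).2 hkl⟩, ?_⟩
  rintro _ ⟨⟨c, hc, rfl⟩, hzc, hkc⟩
  have hzc' := (mem_blk (allN_lt hc) hz).1 hzc
  have hzc2 : c.elem z = true := List.elem_iff.2 hzc'
  rcases h2 c hc with h5 | ⟨m', hm', hs'⟩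
  · rw [hzc2] at h5
    exact absurd h5 (by decide)
  · have e := blk_same hs'
    rw [e] at hkc ⊢
    rw [(key m').1 ⟨hm', (mem_blk (h3 m' hm') hk).1 hkc⟩]

/-- The blocks through the zero of copy u. -/
def Lu : List (List ℕ) := [
  [0, 11, 22, 33, 44, 110],
  [0, 1, 4, 49, 55, 68],
  [54, 0, 3, 48, 109, 67],
  [51, 52, 0, 45, 106, 64],
  [6, 7, 10, 0, 61, 74],
  [0, 2, 15, 27, 86, 92],
  [53, 0, 13, 25, 84, 90],
  [40, 42, 0, 12, 71, 77],
  [28, 30, 43, 0, 59, 65],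
  [0, 5, 19, 39, 85, 102],
  [50, 0, 14, 34, 80, 97],
  [36, 41, 0, 20, 66, 83],
  [16, 21, 35, 0, 101, 63],
  [0, 8, 31, 87, 89, 103],
  [47, 0, 23, 79, 81, 95],
  [24, 32, 0, 56, 58, 72],
  [0, 9, 38, 82, 100, 107],
  [46, 0, 29, 73, 91, 98],
  [17, 26, 0, 99, 62, 69],
  [0, 18, 57, 78, 88, 93],
  [37, 0, 94, 60, 70, 75],
  [0, 76, 96, 104, 105, 108]]

/-- The blocks through the zero of copy p. -/
def Lp : List (List ℕ) := [
  [55, 66, 77, 88, 99, 110],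
  [0, 1, 4, 49, 55, 68],
  [42, 43, 46, 36, 97, 55],
  [24, 26, 39, 51, 55, 61],
  [18, 20, 33, 45, 104, 55],
  [25, 30, 44, 9, 55, 72],
  [8, 13, 27, 47, 93, 55],
  [23, 31, 54, 55, 57, 71],
  [21, 29, 52, 108, 55, 69],
  [7, 15, 38, 94, 96, 55],
  [28, 37, 11, 55, 73, 80],
  [10, 19, 48, 92, 55, 62],
  [3, 12, 41, 85, 103, 55],
  [53, 16, 55, 76, 86, 91],
  [32, 50, 89, 55, 65, 70],
  [22, 40, 79, 100, 55, 60],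
  [17, 35, 74, 95, 105, 55],
  [34, 55, 75, 83, 84, 87],
  [14, 90, 55, 63, 64, 67],
  [6, 82, 102, 55, 56, 59],
  [5, 81, 101, 109, 55, 58],
  [2, 78, 98, 106, 107, 55]]

theorem test_u : test 0 Lu = true := by
  decide +kernel

theorem test_p : test 55 Lp = true := by
  decide +kernel

theorem uniq_of_zero (z : PtsS26111) (hz : ∀ q, q ≠ z → Uniq z q) (a : ZMod 55)
    (q : PtsS26111) (hq : q ≠ trS26111 a z) : Uniq (trS26111 a z) q := by
  have h := (hz (trS26111 (-a) q) (by
    rintro rfl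
    simp [tr_tr, tr_zero] at hq)).tr a
  simpa [tr_tr, tr_zero] using h

theorem uniq_some (x : ZMod 55 ⊕ ZMod 55) (q : PtsS26111) (hq : q ≠ some x) :
    Uniq (some x) q := by
  rcases x with a | a
  · have e : trS26111 a (dec 0) = some (Sum.inl a) := by simp [trS26111, dec, u55]
    rw [← e] at hq ⊢
    exact uniq_of_zero _ (uniq_of_test test_u (by norm_num)) a q hq
  · have e : trS26111 a (dec 55) = some (Sum.inr a) := by simp [trS26111, dec, p55]
    rw [← e] at hq ⊢
    exact uniq_of_zero _ (uniq_of_test test_p (by norm_num)) a q hq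

/-- The translates of the nine base blocks form a Steiner system S(2,6,111). -/
theorem blocksS26111_is_steiner :
    Fintype.card PtsS26111 = 111 ∧
    (∀ b ∈ blocksS26111, b.card = 6) ∧
    (∀ p q : PtsS26111, p ≠ q → ∃! b, b ∈ blocksS26111 ∧ p ∈ b ∧ q ∈ b) := by
  simp only [isBlk_iff]
  refine ⟨by simp [PtsS26111, ZMod.card], ?_, ?_⟩
  · rintro _ ⟨l, hl, rfl⟩
    exact allN_card hl
  · intro p q hpq
    change Uniq p q
    rcases p with _ | x
    · rcases q with _ | y
      · exact absurd rfl hpq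
      · exact (uniq_some y _ hpq).symm
    · exact uniq_some x q hpq.symm
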